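/- Let s > 0 and let Ω ⊆ ℝⁿ be a convex open set. For all F, G ∈ F^s(Ω) and all λ ≥ 0: (i) F + G ∈ F^s(Ω) with ‖F + G‖_{Ḟ^s(Ω)} ≤ ‖F‖_{Ḟ^s(Ω)} + ‖G‖_{Ḟ^s(Ω)}; (ii) λF ∈ F^s(Ω) with ‖λF‖_{Ḟ^s(Ω)} = λ‖F‖_{Ḟ^s(Ω)}; and (iii) there is a constant C depending only on n, s such that FG ∈ F^s(Ω) and ‖FG‖_{F^s(Ω)} ≤ C · ‖F‖_{F^s(Ω)} · ‖G‖_{F^s(Ω)}. -/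

import Mathlib

open Set ENNReal
open scoped NNReal

noncomputable section

/-- The largest integer strictly less than `s` (for `s > 0`). -/
def lowFloor (s : ℝ) : ℕ := ⌈s⌉₊ - 1

variable {E : Type*} [NormedAddCommGroup E] [NormedSpace ℝ E]

/-- `max_{0 ≤ m < s} sup_{x ∈ Ω} |∇^m F(x)|`, valued in `ℝ≥0∞`. -/
def derivSup (s : ℝ) (Ω : Set E) (F : E → ℝ) : ℝ≥0∞ :=
  ⨆ (m : ℕ) (_ : m ≤ lowFloor s) (x : E) (_ : x ∈ Ω),
    (‖iteratedFDerivWithin ℝ m F Ω x‖₊ : ℝ≥0∞)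

/-- The homogeneous Hölder seminorm `‖F‖_{Ċ^s(Ω)}`, valued in `ℝ≥0∞`. -/
def holderSemi (s : ℝ) (Ω : Set E) (F : E → ℝ) : ℝ≥0∞ :=
  ⨆ (x : E) (_ : x ∈ Ω) (y : E) (_ : y ∈ Ω) (_ : x ≠ y),
    (‖iteratedFDerivWithin ℝ (lowFloor s) F Ω x
        - iteratedFDerivWithin ℝ (lowFloor s) F Ω y‖₊ : ℝ≥0∞)
      / ENNReal.ofReal (‖x - y‖ ^ (s - (lowFloor s : ℝ)))

/-- The Hölder norm `‖F‖_{C^s(Ω)}`, valued in `ℝ≥0∞`. -/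
def csNorm (s : ℝ) (Ω : Set E) (F : E → ℝ) : ℝ≥0∞ :=
  derivSup s Ω F + holderSemi s Ω F

/-- Membership in `C^s(Ω)`. -/
def MemCs (s : ℝ) (Ω : Set E) (F : E → ℝ) : Prop :=
  ContDiffOn ℝ (lowFloor s : ℕ∞) F Ω ∧ csNorm s Ω F ≠ ∞

/-- The flat seminorm `‖F‖_{Ḟ^s(Ω)}`, valued in `ℝ≥0∞`.  (In `ℝ≥0∞` one has
`0/0 = 0` and `a/0 = ∞` for `a ≠ 0`, matching the paper's conventions; for
`0 < s < 1` the supremum is empty, hence `0`.) -/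
def flatSemi (s : ℝ) (Ω : Set E) (F : E → ℝ) : ℝ≥0∞ :=
  ⨆ (m : ℕ) (_ : 1 ≤ m) (_ : m ≤ lowFloor s) (x : E) (_ : x ∈ Ω),
    ((‖iteratedFDerivWithin ℝ m F Ω x‖₊ : ℝ≥0∞) ^ s
      / ENNReal.ofReal (F x) ^ (s - (m : ℝ))) ^ (1 / (m : ℝ))

/-- Membership in the cone `F^s(Ω)`. -/
def MemFs (s : ℝ) (Ω : Set E) (F : E → ℝ) : Prop :=
  MemCs s Ω F ∧ (∀ x ∈ Ω, 0 ≤ F x) ∧ flatSemi s Ω F ≠ ∞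

/-- The norm `‖F‖_{F^s(Ω)} = ‖F‖_{C^s(Ω)} + ‖F‖_{Ḟ^s(Ω)}`. -/
def fsNorm (s : ℝ) (Ω : Set E) (F : E → ℝ) : ℝ≥0∞ :=
  csNorm s Ω F + flatSemi s Ω F

/-- `sup_{x ∈ Ω} |F(x)|`, valued in `ℝ≥0∞`. -/
def supNormSet (Ω : Set E) (F : E → ℝ) : ℝ≥0∞ :=
  ⨆ (x : E) (_ : x ∈ Ω), (‖F x‖₊ : ℝ≥0∞)

/-- `P` is (the function given by) a polynomial of degree at most `D`. -/
def IsPolyDeg (D : ℕ) (P : E → ℝ) : Prop :=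
  ContDiff ℝ (⊤ : ℕ∞) P ∧ ∀ x, iteratedFDeriv ℝ (D + 1) P x = 0

/-- The degree-`D` Taylor polynomial (jet) of `F` at `x`, as a function. -/
def jetAt (D : ℕ) (F : E → ℝ) (x : E) : E → ℝ :=
  fun y => ∑ m ∈ Finset.range (D + 1),
    (iteratedFDeriv ℝ m F x fun _ => y - x) / m.factorial

/-- The degree-`D` Taylor polynomial of `F` at `x` using derivatives within `Ω`. -/
def jetWithinAt (D : ℕ) (F : E → ℝ) (Ω : Set E) (x : E) : E → ℝ :=
  fun y => ∑ m ∈ Finset.range (D + 1),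
    (iteratedFDerivWithin ℝ m F Ω x fun _ => y - x) / m.factorial

/-- The pointwise flatness quantity `max_{1≤m<s} (|∇^m P(x)|^s / P(x)^{s-m})^{1/m}`. -/
def jetFlatAt (s : ℝ) (P : E → ℝ) (x : E) : ℝ≥0∞ :=
  ⨆ (m : ℕ) (_ : 1 ≤ m) (_ : m ≤ lowFloor s),
    ((‖iteratedFDeriv ℝ m P x‖₊ : ℝ≥0∞) ^ s
      / ENNReal.ofReal (P x) ^ (s - (m : ℝ))) ^ (1 / (m : ℝ))

/-- The set `Γ(x₀, M)` of flat nonnegative jets. -/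
def Gamma (s : ℝ) (x₀ : E) (M : ℝ) : Set (E → ℝ) :=
  {P | IsPolyDeg (lowFloor s) P ∧ 0 ≤ P x₀ ∧
    (∀ m ≤ lowFloor s, ‖iteratedFDeriv ℝ m P x₀‖ ≤ M) ∧
    jetFlatAt s P x₀ ≤ ENNReal.ofReal M}

/-- `‖P⃗‖_{J C^s(E)}` for a family of jets `P : E → (E → ℝ)`. -/
def jetCNorm (s : ℝ) (Eset : Set E) (P : E → E → ℝ) : ℝ≥0∞ :=
  (⨆ (x : E) (_ : x ∈ Eset) (m : ℕ) (_ : m ≤ lowFloor s),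
      (‖iteratedFDeriv ℝ m (P x) x‖₊ : ℝ≥0∞))
  + ⨆ (x : E) (_ : x ∈ Eset) (y : E) (_ : y ∈ Eset) (_ : x ≠ y)
      (m : ℕ) (_ : m ≤ lowFloor s),
      (‖iteratedFDeriv ℝ m (P x - P y) y‖₊ : ℝ≥0∞)
        / ENNReal.ofReal (‖x - y‖ ^ (s - (m : ℝ)))

/-- `‖P⃗‖_{J Ḟ^s(E)}` for a family of jets. -/
def jetFlatNorm (s : ℝ) (Eset : Set E) (P : E → E → ℝ) : ℝ≥0∞ :=
  ⨆ (x : E) (_ : x ∈ Eset) (m : ℕ) (_ : 1 ≤ m) (_ : m ≤ lowFloor s),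
    ((‖iteratedFDeriv ℝ m (P x) x‖₊ : ℝ≥0∞) ^ s
      / ENNReal.ofReal |P x x| ^ (s - (m : ℝ))) ^ (1 / (m : ℝ))

/-- `‖P⃗‖_{J F^s(E)}`. -/
def jetFsNorm (s : ℝ) (Eset : Set E) (P : E → E → ℝ) : ℝ≥0∞ :=
  jetCNorm s Eset P + jetFlatNorm s Eset P

/-- The trace norm `‖f‖_{F^s(S)}` (with `inf ∅ = ∞`). -/
def traceNorm (s : ℝ) (S : Set E) (f : E → ℝ) : ℝ≥0∞ :=
  ⨅ (F : E → ℝ) (_ : MemFs s (univ : Set E) F ∧ ∀ x ∈ S, F x = f x),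
    fsNorm s (univ : Set E) F


section Auxiliary

lemma lowFloor_lt {s : ℝ} (hs : 0 < s) : (lowFloor s : ℝ) < s := by
  have h1 : 0 < ⌈s⌉₊ := Nat.ceil_pos.2 hs
  exact Nat.lt_ceil.1 (by unfold lowFloor; omega)

/-! ### Arithmetic in the extended nonnegative reals -/

lemma flat_quotient_le_iff {s : ℝ} {m : ℕ} (hm : 1 ≤ m) (hms : (m : ℝ) < s)
    {N f A : ℝ≥0∞} (hf : f ≠ ∞) (hA : A ≠ ∞) :
    (N ^ s / f ^ (s - (m : ℝ))) ^ (1 / (m : ℝ)) ≤ A ↔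
      N ≤ A ^ ((m : ℝ) / s) * f ^ (1 - (m : ℝ) / s) := by
  have hm0 : (0 : ℝ) < m := by exact_mod_cast hm
  have hs : 0 < s := hm0.trans hms
  rw [one_div, ENNReal.rpow_inv_le_iff hm0, ENNReal.div_le_iff_le_mul
    (Or.inr (ENNReal.rpow_ne_top_of_nonneg hm0.le hA))
    (Or.inl (ENNReal.rpow_ne_top_of_nonneg (sub_nonneg.2 hms.le) hf)),
    ← ENNReal.le_rpow_inv_iff hs, ENNReal.mul_rpow_of_nonneg _ _ (inv_nonneg.2 hs.le),
    ← ENNReal.rpow_mul, ← ENNReal.rpow_mul]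
  have h1 : (m : ℝ) * s⁻¹ = m / s := rfl
  have h2 : (s - m) * s⁻¹ = 1 - m / s := by field_simp
  rw [h1, h2]

lemma rpow_mul_rpow_add_le {t : ℝ} (h0 : 0 < t) (h1 : t < 1) (A B f g : ℝ≥0∞) :
    A ^ t * f ^ (1 - t) + B ^ t * g ^ (1 - t) ≤ (A + B) ^ t * (f + g) ^ (1 - t) := by
  have h1' : 0 < 1 - t := by linarith
  have hpq : (t⁻¹).HolderConjugate (1 - t)⁻¹ := by
    rw [Real.holderConjugate_iff]
    exact ⟨(one_lt_inv₀ h0).2 h1, by simp⟩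
  have := ENNReal.inner_le_Lp_mul_Lq Finset.univ ![A ^ t, B ^ t] ![f ^ (1 - t), g ^ (1 - t)] hpq
  simpa [Fin.sum_univ_two, ← ENNReal.rpow_mul, h0.ne', h1'.ne'] using this

lemma rpow_div_rpow_mul_left {s : ℝ} {m : ℕ} (hm : 1 ≤ m) (hms : (m : ℝ) < s)
    {l : ℝ≥0∞} (hl0 : l ≠ 0) (hl : l ≠ ∞) (N f : ℝ≥0∞) :
    ((l * N) ^ s / (l * f) ^ (s - (m : ℝ))) ^ (1 / (m : ℝ)) =
      l * (N ^ s / f ^ (s - (m : ℝ))) ^ (1 / (m : ℝ)) := by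
  have hm0 : (0 : ℝ) < m := by exact_mod_cast hm
  have hs : 0 < s := hm0.trans hms
  have hsm : 0 < s - m := sub_pos.2 hms
  have hls0 : l ^ (s - (m : ℝ)) ≠ 0 := by simp [ENNReal.rpow_eq_zero_iff, hl0, hl]
  have hls : l ^ (s - (m : ℝ)) ≠ ∞ := ENNReal.rpow_ne_top_of_nonneg hsm.le hl
  have key : l ^ s / l ^ (s - (m : ℝ)) = l ^ (m : ℝ) := by
    rw [← ENNReal.rpow_sub _ _ hl0 hl]; congr 1; ring
  rw [ENNReal.mul_rpow_of_nonneg _ _ hs.le, ENNReal.mul_rpow_of_nonneg _ _ hsm.le,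
    ENNReal.mul_div_mul_comm (Or.inl hls0) (Or.inl hls), key,
    ENNReal.mul_rpow_of_nonneg _ _ (by positivity), ← ENNReal.rpow_mul]
  rw [mul_one_div_cancel hm0.ne', ENNReal.rpow_one]

lemma enorm_add_le_enorm_add_enorm {V : Type*} [SeminormedAddCommGroup V] (a b : V) :
    ‖a + b‖ₑ ≤ ‖a‖ₑ + ‖b‖ₑ := by
  simp only [enorm_eq_nnnorm]
  exact_mod_cast nnnorm_add_le a b

/-! ### Bounds by the norms -/

lemma enorm_iteratedFDerivWithin_le_derivSup {s : ℝ} {Ω : Set E} (F : E → ℝ) {m : ℕ}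
    (hm : m ≤ lowFloor s) {x : E} (hx : x ∈ Ω) :
    ‖iteratedFDerivWithin ℝ m F Ω x‖ₑ ≤ derivSup s Ω F :=
  le_iSup₂_of_le m hm (le_iSup₂_of_le x hx le_rfl)

lemma derivSup_le_iff {s : ℝ} {Ω : Set E} {F : E → ℝ} {A : ℝ≥0∞} :
    derivSup s Ω F ≤ A ↔
      ∀ m ≤ lowFloor s, ∀ x ∈ Ω, ‖iteratedFDerivWithin ℝ m F Ω x‖ₑ ≤ A := by
  simp only [derivSup, iSup_le_iff]; rfl

lemma holderSemi_le_iff {s : ℝ} {Ω : Set E} {F : E → ℝ} {A : ℝ≥0∞} :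
    holderSemi s Ω F ≤ A ↔ ∀ x ∈ Ω, ∀ y ∈ Ω, x ≠ y →
      ‖iteratedFDerivWithin ℝ (lowFloor s) F Ω x - iteratedFDerivWithin ℝ (lowFloor s) F Ω y‖ₑ
        ≤ A * ENNReal.ofReal (‖x - y‖ ^ (s - (lowFloor s : ℝ))) := by
  simp only [holderSemi, iSup_le_iff]
  refine forall₂_congr fun x _ => forall₂_congr fun y _ => forall_congr' fun hxy => ?_
  have : 0 < ‖x - y‖ := norm_pos_iff.2 (sub_ne_zero.2 hxy)
  rw [ENNReal.div_le_iff (by simpa using Real.rpow_pos_of_pos this _) ENNReal.ofReal_ne_top]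
  rfl

lemma flatSemi_le_iff {s : ℝ} (hs : 0 < s) {Ω : Set E} {F : E → ℝ} {A : ℝ≥0∞} (hA : A ≠ ∞) :
    flatSemi s Ω F ≤ A ↔ ∀ m, 1 ≤ m → m ≤ lowFloor s → ∀ x ∈ Ω,
      ‖iteratedFDerivWithin ℝ m F Ω x‖ₑ ≤
        A ^ ((m : ℝ) / s) * ENNReal.ofReal (F x) ^ (1 - (m : ℝ) / s) := by
  simp only [flatSemi, iSup_le_iff]
  refine forall_congr' fun m => forall_congr' fun hm => forall_congr' fun hmk =>
    forall₂_congr fun x _ => ?_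
  have hms : (m : ℝ) < s := lt_of_le_of_lt (by exact_mod_cast hmk) (lowFloor_lt hs)
  exact flat_quotient_le_iff hm hms ENNReal.ofReal_ne_top hA

/-! ### Sums -/

lemma derivSup_add_le {s : ℝ} {Ω : Set E} (hΩ : IsOpen Ω) {F G : E → ℝ}
    (hF : ContDiffOn ℝ (lowFloor s : ℕ∞) F Ω) (hG : ContDiffOn ℝ (lowFloor s : ℕ∞) G Ω) :
    derivSup s Ω (F + G) ≤ derivSup s Ω F + derivSup s Ω G := by
  refine derivSup_le_iff.2 fun m hm x hx => ?_
  have hm' : (m : WithTop ℕ∞) ≤ ((lowFloor s : ℕ∞) : WithTop ℕ∞) := by exact_mod_cast hm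
  rw [iteratedFDerivWithin_add_apply ((hF x hx).of_le hm') ((hG x hx).of_le hm')
    hΩ.uniqueDiffOn hx]
  refine (enorm_add_le_enorm_add_enorm _ _).trans ?_
  exact add_le_add (enorm_iteratedFDerivWithin_le_derivSup F hm hx)
    (enorm_iteratedFDerivWithin_le_derivSup G hm hx)

lemma holderSemi_add_le {s : ℝ} {Ω : Set E} (hΩ : IsOpen Ω) {F G : E → ℝ}
    (hF : ContDiffOn ℝ (lowFloor s : ℕ∞) F Ω) (hG : ContDiffOn ℝ (lowFloor s : ℕ∞) G Ω) :
    holderSemi s Ω (F + G) ≤ holderSemi s Ω F + holderSemi s Ω G := by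
  refine holderSemi_le_iff.2 fun x hx y hy hxy => ?_
  rw [iteratedFDerivWithin_add_apply (hF x hx) (hG x hx) hΩ.uniqueDiffOn hx,
    iteratedFDerivWithin_add_apply (hF y hy) (hG y hy) hΩ.uniqueDiffOn hy,
    add_sub_add_comm, add_mul]
  refine (enorm_add_le_enorm_add_enorm _ _).trans ?_
  exact add_le_add (holderSemi_le_iff.1 le_rfl x hx y hy hxy)
    (holderSemi_le_iff.1 le_rfl x hx y hy hxy)

lemma flatSemi_add_le {s : ℝ} (hs : 0 < s) {Ω : Set E} (hΩ : IsOpen Ω) {F G : E → ℝ}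
    (hF : MemFs s Ω F) (hG : MemFs s Ω G) :
    flatSemi s Ω (F + G) ≤ flatSemi s Ω F + flatSemi s Ω G := by
  obtain ⟨⟨hFc, -⟩, hF0, hFf⟩ := hF
  obtain ⟨⟨hGc, -⟩, hG0, hGf⟩ := hG
  refine (flatSemi_le_iff hs (ENNReal.add_ne_top.2 ⟨hFf, hGf⟩)).2 fun m hm hmk x hx => ?_
  have hm' : (m : WithTop ℕ∞) ≤ ((lowFloor s : ℕ∞) : WithTop ℕ∞) := by exact_mod_cast hmk
  have hms : (m : ℝ) < s := lt_of_le_of_lt (by exact_mod_cast hmk) (lowFloor_lt hs)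
  have hm0 : (0 : ℝ) < m := by exact_mod_cast hm
  rw [iteratedFDerivWithin_add_apply ((hFc x hx).of_le hm') ((hGc x hx).of_le hm')
    hΩ.uniqueDiffOn hx, Pi.add_apply, ENNReal.ofReal_add (hF0 x hx) (hG0 x hx)]
  refine (enorm_add_le_enorm_add_enorm _ _).trans ?_
  exact (add_le_add
    ((flatSemi_le_iff hs hFf).1 le_rfl m hm hmk x hx)
    ((flatSemi_le_iff hs hGf).1 le_rfl m hm hmk x hx)).trans
    (rpow_mul_rpow_add_le (by positivity) ((div_lt_one hs).2 hms) _ _ _ _)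

lemma MemFs.add {s : ℝ} (hs : 0 < s) {Ω : Set E} (hΩ : IsOpen Ω) {F G : E → ℝ}
    (hF : MemFs s Ω F) (hG : MemFs s Ω G) : MemFs s Ω (F + G) := by
  have hflat := flatSemi_add_le hs hΩ hF hG
  obtain ⟨⟨hFc, hFn⟩, hF0, hFf⟩ := hF
  obtain ⟨⟨hGc, hGn⟩, hG0, hGf⟩ := hG
  refine ⟨⟨hFc.add hGc, ?_⟩, fun x hx => add_nonneg (hF0 x hx) (hG0 x hx),
    ne_top_of_le_ne_top (ENNReal.add_ne_top.2 ⟨hFf, hGf⟩) hflat⟩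
  refine ne_top_of_le_ne_top (ENNReal.add_ne_top.2 ⟨hFn, hGn⟩)
    ((add_le_add (derivSup_add_le hΩ hFc hGc) (holderSemi_add_le hΩ hFc hGc)).trans_eq ?_)
  unfold csNorm
  ring

/-! ### Scalar multiples -/

lemma csNorm_const_smul_le {s : ℝ} {Ω : Set E} (hΩ : IsOpen Ω) {F : E → ℝ}
    (hF : ContDiffOn ℝ (lowFloor s : ℕ∞) F Ω) (c : ℝ) :
    csNorm s Ω (c • F) ≤ ‖c‖ₑ * csNorm s Ω F := by
  rw [csNorm, csNorm, mul_add]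
  refine add_le_add (derivSup_le_iff.2 fun m hm x hx => ?_)
    (holderSemi_le_iff.2 fun x hx y hy hxy => ?_)
  · have hm' : (m : WithTop ℕ∞) ≤ ((lowFloor s : ℕ∞) : WithTop ℕ∞) := by exact_mod_cast hm
    rw [iteratedFDerivWithin_const_smul_apply ((hF x hx).of_le hm') hΩ.uniqueDiffOn hx, enorm_smul]
    gcongr
    exact enorm_iteratedFDerivWithin_le_derivSup F hm hx
  · rw [iteratedFDerivWithin_const_smul_apply (hF x hx) hΩ.uniqueDiffOn hx,
      iteratedFDerivWithin_const_smul_apply (hF y hy) hΩ.uniqueDiffOn hy, ← smul_sub, enorm_smul,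
      mul_assoc]
    gcongr
    exact holderSemi_le_iff.1 le_rfl x hx y hy hxy

lemma flatSemi_const_smul {s : ℝ} (hs : 0 < s) {Ω : Set E} (hΩ : IsOpen Ω) {F : E → ℝ}
    (hF : ContDiffOn ℝ (lowFloor s : ℕ∞) F Ω) {c : ℝ} (hc : 0 ≤ c) :
    flatSemi s Ω (c • F) = ENNReal.ofReal c * flatSemi s Ω F := by
  simp only [flatSemi, ENNReal.mul_iSup]
  refine iSup_congr fun m => iSup_congr fun hm => iSup_congr fun hmk => iSup_congr fun x =>
    iSup_congr fun hx => ?_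
  have hm' : (m : WithTop ℕ∞) ≤ ((lowFloor s : ℕ∞) : WithTop ℕ∞) := by exact_mod_cast hmk
  have hms : (m : ℝ) < s := lt_of_le_of_lt (by exact_mod_cast hmk) (lowFloor_lt hs)
  have hm0 : (0 : ℝ) < m := by exact_mod_cast hm
  rw [iteratedFDerivWithin_const_smul_apply ((hF x hx).of_le hm') hΩ.uniqueDiffOn hx,
    Pi.smul_apply, smul_eq_mul, ENNReal.ofReal_mul hc, nnnorm_smul, ENNReal.coe_mul]
  have hcn : ((‖c‖₊ : ℝ≥0) : ℝ≥0∞) = ENNReal.ofReal c := (Real.enorm_eq_ofReal hc)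
  rw [hcn]
  rcases hc.eq_or_lt with rfl | hc
  · simp [hs, sub_pos.2 hms, hm0]
  · exact rpow_div_rpow_mul_left hm hms (by simpa using hc) ENNReal.ofReal_ne_top _ _

lemma MemFs.const_smul {s : ℝ} (hs : 0 < s) {Ω : Set E} (hΩ : IsOpen Ω) {F : E → ℝ}
    (hF : MemFs s Ω F) {c : ℝ} (hc : 0 ≤ c) : MemFs s Ω (c • F) := by
  obtain ⟨⟨hFc, hFn⟩, hF0, hFf⟩ := hF
  refine ⟨⟨hFc.const_smul c, ?_⟩, fun x hx => mul_nonneg hc (hF0 x hx), ?_⟩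
  · exact ne_top_of_le_ne_top (ENNReal.mul_ne_top enorm_ne_top hFn) (csNorm_const_smul_le hΩ hFc c)
  · rw [flatSemi_const_smul hs hΩ hFc hc]
    exact ENNReal.mul_ne_top ENNReal.ofReal_ne_top hFf

/-! ### Products -/

lemma enorm_iteratedFDerivWithin_mul_le {Ω : Set E} (hΩ : IsOpen Ω) {F G : E → ℝ} {m : ℕ}
    (hF : ContDiffOn ℝ m F Ω) (hG : ContDiffOn ℝ m G Ω) {x : E} (hx : x ∈ Ω) {K : ℝ≥0∞}
    (hK : ∀ i ≤ m,
      ‖iteratedFDerivWithin ℝ i F Ω x‖ₑ * ‖iteratedFDerivWithin ℝ (m - i) G Ω x‖ₑ ≤ K) :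
    ‖iteratedFDerivWithin ℝ m (F * G) Ω x‖ₑ ≤ 2 ^ m * K := by
  have h := ENNReal.ofReal_le_ofReal
    (norm_iteratedFDerivWithin_mul_le hF hG hΩ.uniqueDiffOn hx le_rfl)
  rw [ofReal_norm, ENNReal.ofReal_sum_of_nonneg (fun i _ => by positivity)] at h
  refine h.trans ((Finset.sum_le_sum (g := fun i => (m.choose i : ℝ≥0∞) * K)
    fun i hi => ?_).trans_eq ?_)
  · rw [mul_assoc, ENNReal.ofReal_mul (by positivity), ENNReal.ofReal_mul (by positivity),
      ofReal_norm, ofReal_norm, ENNReal.ofReal_natCast]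
    gcongr
    exact hK i (by simpa [Nat.lt_succ_iff] using hi)
  · rw [← Finset.sum_mul]
    congr 1
    exact_mod_cast Nat.sum_range_choose m

lemma enorm_iteratedFDerivWithin_sub_le {s : ℝ} (hs : 0 < s) {Ω : Set E} (hconv : Convex ℝ Ω)
    (hΩ : IsOpen Ω) {F : E → ℝ} (hF : MemCs s Ω F) {i : ℕ} (hi : i ≤ lowFloor s) {x y : E}
    (hx : x ∈ Ω) (hy : y ∈ Ω) (hxy : x ≠ y) :
    ‖iteratedFDerivWithin ℝ i F Ω x - iteratedFDerivWithin ℝ i F Ω y‖ₑ ≤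
      2 * csNorm s Ω F * ENNReal.ofReal (‖x - y‖ ^ (s - (lowFloor s : ℝ))) := by
  obtain ⟨hFc, hFn⟩ := hF
  have hα0 : 0 < s - (lowFloor s : ℝ) := sub_pos.2 (lowFloor_lt hs)
  have hα1 : s - (lowFloor s : ℝ) ≤ 1 := by
    have h1 : s ≤ ⌈s⌉₊ := Nat.le_ceil s
    have h2 : ⌈s⌉₊ ≤ lowFloor s + 1 := by unfold lowFloor; omega
    have h3 : (⌈s⌉₊ : ℝ) ≤ lowFloor s + 1 := by exact_mod_cast h2
    linarith
  rcases hi.eq_or_lt with rfl | hi'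
  · refine (holderSemi_le_iff.1 le_rfl x hx y hy hxy).trans ?_
    gcongr
    exact (le_add_self : holderSemi s Ω F ≤ csNorm s Ω F).trans
      (le_mul_of_one_le_left' one_le_two)
  have hS : derivSup s Ω F ≤ csNorm s Ω F := le_self_add
  have hr : 0 < ‖x - y‖ := norm_pos_iff.2 (sub_ne_zero.2 hxy)
  rcases le_total ‖x - y‖ 1 with hle | hge
  · have hdiff := hFc.differentiableOn_iteratedFDerivWithin (m := i)
      (by exact_mod_cast hi') hΩ.uniqueDiffOn
    have hbd : ∀ z ∈ Ω, ‖fderivWithin ℝ (iteratedFDerivWithin ℝ i F Ω) Ω z‖ ≤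
        (csNorm s Ω F).toReal := fun z hz => by
      rw [norm_fderivWithin_iteratedFDerivWithin, ← toReal_enorm]
      exact ENNReal.toReal_mono hFn
        ((enorm_iteratedFDerivWithin_le_derivSup F hi' hz).trans hS)
    have h := hconv.norm_image_sub_le_of_norm_fderivWithin_le hdiff hbd hy hx
    have h' := ENNReal.ofReal_le_ofReal h
    rw [ofReal_norm, ENNReal.ofReal_mul ENNReal.toReal_nonneg, ENNReal.ofReal_toReal hFn] at h'
    refine h'.trans ?_
    gcongr
    · exact le_mul_of_one_le_left' one_le_two
    · exact Real.self_le_rpow_of_le_one hr.le hle hα1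
  · have h1 : 1 ≤ ENNReal.ofReal (‖x - y‖ ^ (s - (lowFloor s : ℝ))) :=
      ENNReal.one_le_ofReal.2 (Real.one_le_rpow hge hα0.le)
    refine le_trans ?_ (le_mul_of_one_le_right' h1)
    rw [two_mul]
    exact enorm_sub_le.trans (add_le_add
      ((enorm_iteratedFDerivWithin_le_derivSup F hi hx).trans hS)
      ((enorm_iteratedFDerivWithin_le_derivSup F hi hy).trans hS))

lemma iteratedFDerivWithin_eq_of_isOpen {U V : Set E} (hU : IsOpen U) (hV : IsOpen V) (f : E → ℝ)
    (m : ℕ) {x : E} (hxU : x ∈ U) (hxV : x ∈ V) :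
    iteratedFDerivWithin ℝ m f U x = iteratedFDerivWithin ℝ m f V x := by
  rw [iteratedFDerivWithin_of_isOpen m hU hxU, iteratedFDerivWithin_of_isOpen m hV hxV]

lemma iteratedFDerivWithin_shift {U V : Set E} (hU : IsOpen U) (hV : IsOpen V) (f : E → ℝ)
    (m : ℕ) {x h : E} (hxU : x ∈ U) (hxV : x + h ∈ V) :
    iteratedFDerivWithin ℝ m (fun z => f (z + h)) U x = iteratedFDerivWithin ℝ m f V (x + h) := by
  rw [iteratedFDerivWithin_of_isOpen m hU hxU, iteratedFDerivWithin_of_isOpen m hV hxV,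
    iteratedFDeriv_comp_add_right]

lemma iteratedFDerivWithin_sub_of_contDiffOn {U : Set E} (hU : IsOpen U) {f g : E → ℝ} {m : ℕ}
    (hf : ContDiffOn ℝ m f U) (hg : ContDiffOn ℝ m g U) {x : E} (hx : x ∈ U) :
    iteratedFDerivWithin ℝ m (f - g) U x =
      iteratedFDerivWithin ℝ m f U x - iteratedFDerivWithin ℝ m g U x := by
  have hfg : ContDiffOn ℝ m (f - g) U := hf.sub hg
  rw [eq_sub_iff_add_eq, ← iteratedFDerivWithin_add_apply (hfg x hx) (hg x hx) hU.uniqueDiffOn hx,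
    sub_add_cancel]

/-- The increment of `∇^m (F G)` is estimated by applying the Leibniz bound to
`(F(· + h) - F) G(· + h)` and `F (G(· + h) - G)` on `Ω ∩ (Ω - h)`. -/
lemma enorm_iteratedFDerivWithin_mul_sub_le {Ω : Set E} (hΩ : IsOpen Ω) {F G : E → ℝ} {m : ℕ}
    (hF : ContDiffOn ℝ m F Ω) (hG : ContDiffOn ℝ m G Ω) {x y : E} (hx : x ∈ Ω) (hy : y ∈ Ω)
    {K : ℝ≥0∞}
    (hK₁ : ∀ i ≤ m, ‖iteratedFDerivWithin ℝ i F Ω x - iteratedFDerivWithin ℝ i F Ω y‖ₑ *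
      ‖iteratedFDerivWithin ℝ (m - i) G Ω x‖ₑ ≤ K)
    (hK₂ : ∀ i ≤ m, ‖iteratedFDerivWithin ℝ i F Ω y‖ₑ *
      ‖iteratedFDerivWithin ℝ (m - i) G Ω x - iteratedFDerivWithin ℝ (m - i) G Ω y‖ₑ ≤ K) :
    ‖iteratedFDerivWithin ℝ m (F * G) Ω x - iteratedFDerivWithin ℝ m (F * G) Ω y‖ₑ ≤
      2 ^ m * K + 2 ^ m * K := by
  obtain ⟨h, rfl⟩ : ∃ h, y + h = x := ⟨x - y, by abel⟩
  set U : Set E := Ω ∩ (fun z => z + h) ⁻¹' Ω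
  have hU : IsOpen U := hΩ.inter (hΩ.preimage (by fun_prop))
  have hyU : y ∈ U := ⟨hy, hx⟩
  have hFU : ContDiffOn ℝ m F U := hF.mono inter_subset_left
  have hGU : ContDiffOn ℝ m G U := hG.mono inter_subset_left
  have hshift : ContDiffOn ℝ m (fun z : E => z + h) U := by fun_prop
  have hFh : ContDiffOn ℝ m (fun z => F (z + h)) U := hF.comp hshift fun z hz => hz.2
  have hGh : ContDiffOn ℝ m (fun z => G (z + h)) U := hG.comp hshift fun z hz => hz.2
  have hdiff : ∀ {f : E → ℝ}, ContDiffOn ℝ m f U → ContDiffOn ℝ m (fun z => f (z + h)) U →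
      ∀ i ≤ m, iteratedFDerivWithin ℝ i ((fun z => f (z + h)) - f) U y =
        iteratedFDerivWithin ℝ i f Ω (y + h) - iteratedFDerivWithin ℝ i f Ω y := by
    intro f hf hfh i hi
    have hi' : (i : WithTop ℕ∞) ≤ m := by exact_mod_cast hi
    rw [iteratedFDerivWithin_sub_of_contDiffOn hU (hfh.of_le hi') (hf.of_le hi') hyU,
      iteratedFDerivWithin_shift hU hΩ f i hyU hx, iteratedFDerivWithin_eq_of_isOpen hU hΩ f i hyU hy]
  have hfun : (fun z => (F * G) (z + h)) - F * G =
      ((fun z => F (z + h)) - F) * (fun z => G (z + h)) + F * ((fun z => G (z + h)) - G) := by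
    ext z
    simp only [Pi.sub_apply, Pi.mul_apply, Pi.add_apply]
    ring
  have hFd : ContDiffOn ℝ m ((fun z => F (z + h)) - F) U := hFh.sub hFU
  have hGd : ContDiffOn ℝ m ((fun z => G (z + h)) - G) U := hGh.sub hGU
  have hprod₁ : ContDiffOn ℝ m (((fun z => F (z + h)) - F) * fun z => G (z + h)) U := hFd.mul hGh
  have hprod₂ : ContDiffOn ℝ m (F * ((fun z => G (z + h)) - G)) U := hFU.mul hGd
  rw [← hdiff (f := F * G) (hFU.mul hGU) (hFh.mul hGh) m le_rfl, hfun, iteratedFDerivWithin_add_apply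
    (hprod₁ y hyU) (hprod₂ y hyU) hU.uniqueDiffOn hyU]
  refine (enorm_add_le_enorm_add_enorm _ _).trans (add_le_add
    (enorm_iteratedFDerivWithin_mul_le hU hFd hGh hyU fun i hi => ?_)
    (enorm_iteratedFDerivWithin_mul_le hU hFU hGd hyU fun i hi => ?_))
  · rw [hdiff hFU hFh i hi, iteratedFDerivWithin_shift hU hΩ G _ hyU hx]
    exact hK₁ i hi
  · rw [hdiff hGU hGh _ (Nat.sub_le m i), iteratedFDerivWithin_eq_of_isOpen hU hΩ F i hyU hy]
    exact hK₂ i hi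

lemma derivSup_mul_le {s : ℝ} {Ω : Set E} (hΩ : IsOpen Ω) {F G : E → ℝ}
    (hF : ContDiffOn ℝ (lowFloor s : ℕ∞) F Ω) (hG : ContDiffOn ℝ (lowFloor s : ℕ∞) G Ω) :
    derivSup s Ω (F * G) ≤ 2 ^ lowFloor s * (derivSup s Ω F * derivSup s Ω G) := by
  refine derivSup_le_iff.2 fun m hm x hx => ?_
  have hm' : (m : WithTop ℕ∞) ≤ ((lowFloor s : ℕ∞) : WithTop ℕ∞) := by exact_mod_cast hm
  refine (enorm_iteratedFDerivWithin_mul_le hΩ (hF.of_le hm') (hG.of_le hm') hx fun i hi =>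
    mul_le_mul' (enorm_iteratedFDerivWithin_le_derivSup F (hi.trans hm) hx)
      (enorm_iteratedFDerivWithin_le_derivSup G ((Nat.sub_le m i).trans hm) hx)).trans ?_
  gcongr
  exact one_le_two

lemma holderSemi_mul_le {s : ℝ} (hs : 0 < s) {Ω : Set E} (hconv : Convex ℝ Ω) (hΩ : IsOpen Ω)
    {F G : E → ℝ} (hF : MemCs s Ω F) (hG : MemCs s Ω G) :
    holderSemi s Ω (F * G) ≤ 4 * 2 ^ lowFloor s * (csNorm s Ω F * csNorm s Ω G) := by
  refine holderSemi_le_iff.2 fun x hx y hy hxy => ?_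
  have hFS : derivSup s Ω F ≤ csNorm s Ω F := le_self_add
  have hGS : derivSup s Ω G ≤ csNorm s Ω G := le_self_add
  refine (enorm_iteratedFDerivWithin_mul_sub_le hΩ hF.1 hG.1 hx hy
    (K := 2 * (csNorm s Ω F * csNorm s Ω G) *
      ENNReal.ofReal (‖x - y‖ ^ (s - (lowFloor s : ℝ)))) (fun i hi => ?_) (fun i hi => ?_)).trans_eq
      (by ring)
  · refine (mul_le_mul' (enorm_iteratedFDerivWithin_sub_le hs hconv hΩ hF hi hx hy hxy)
      ((enorm_iteratedFDerivWithin_le_derivSup G (Nat.sub_le _ i) hx).trans hGS)).trans_eq (by ring)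
  · refine (mul_le_mul' ((enorm_iteratedFDerivWithin_le_derivSup F hi hy).trans hFS)
      (enorm_iteratedFDerivWithin_sub_le hs hconv hΩ hG (Nat.sub_le _ i) hx hy hxy)).trans_eq
        (by ring)

lemma MemFs.fsNorm_ne_top {s : ℝ} {Ω : Set E} {F : E → ℝ} (hF : MemFs s Ω F) :
    fsNorm s Ω F ≠ ∞ :=
  ENNReal.add_ne_top.2 ⟨hF.1.2, hF.2.2⟩

lemma MemFs.ofReal_le_fsNorm {s : ℝ} {Ω : Set E} {F : E → ℝ} (hF : MemFs s Ω F) {x : E}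
    (hx : x ∈ Ω) : ENNReal.ofReal (F x) ≤ fsNorm s Ω F := by
  have h := enorm_iteratedFDerivWithin_le_derivSup (s := s) F (Nat.zero_le _) hx
  rw [← ofReal_norm, norm_iteratedFDerivWithin_zero, Real.norm_of_nonneg (hF.2.1 x hx)] at h
  exact h.trans (le_self_add.trans le_self_add)

lemma MemFs.enorm_iteratedFDerivWithin_le {s : ℝ} (hs : 0 < s) {Ω : Set E} {F : E → ℝ}
    (hF : MemFs s Ω F) {i m : ℕ} (him : i ≤ m) (hm : m ≤ lowFloor s) {x : E} (hx : x ∈ Ω) :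
    ‖iteratedFDerivWithin ℝ i F Ω x‖ₑ ≤
      fsNorm s Ω F ^ ((m : ℝ) / s) * ENNReal.ofReal (F x) ^ (1 - (m : ℝ) / s) := by
  have hms : (m : ℝ) / s < 1 :=
    (div_lt_one hs).2 (lt_of_le_of_lt (by exact_mod_cast hm) (lowFloor_lt hs))
  have him' : (i : ℝ) ≤ m := by exact_mod_cast him
  have h1 : ‖iteratedFDerivWithin ℝ i F Ω x‖ₑ ≤
      fsNorm s Ω F ^ ((i : ℝ) / s) * ENNReal.ofReal (F x) ^ (1 - (i : ℝ) / s) := by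
    rcases Nat.eq_zero_or_pos i with rfl | hi
    · rw [← ofReal_norm, norm_iteratedFDerivWithin_zero, Real.norm_of_nonneg (hF.2.1 x hx)]
      simp
    · exact (flatSemi_le_iff hs hF.fsNorm_ne_top).1 le_add_self i hi (him.trans hm) x hx
  have hd : 0 ≤ ((m : ℝ) - i) / s := div_nonneg (sub_nonneg.2 him') hs.le
  have e1 : 1 - (i : ℝ) / s = ((m : ℝ) - i) / s + (1 - (m : ℝ) / s) := by ring
  have e2 : (m : ℝ) / s = (i : ℝ) / s + ((m : ℝ) - i) / s := by ring
  refine h1.trans ?_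
  rw [e1, ENNReal.rpow_add_of_nonneg _ _ hd (by linarith), ← mul_assoc]
  conv_rhs => rw [e2, ENNReal.rpow_add_of_nonneg _ _ (by positivity) hd]
  rw [← e2]
  gcongr
  exact hF.ofReal_le_fsNorm hx

lemma flatSemi_mul_le {s : ℝ} (hs : 0 < s) {Ω : Set E} (hΩ : IsOpen Ω) {F G : E → ℝ}
    (hF : MemFs s Ω F) (hG : MemFs s Ω G) :
    flatSemi s Ω (F * G) ≤ 2 ^ s * (fsNorm s Ω F * fsNorm s Ω G) := by
  have h2 : (2 : ℝ≥0∞) ^ s ≠ ∞ := ENNReal.rpow_ne_top_of_nonneg hs.le ENNReal.ofNat_ne_top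
  refine (flatSemi_le_iff hs (ENNReal.mul_ne_top h2
    (ENNReal.mul_ne_top hF.fsNorm_ne_top hG.fsNorm_ne_top))).2 fun m hm hmk x hx => ?_
  have hm' : (m : WithTop ℕ∞) ≤ ((lowFloor s : ℕ∞) : WithTop ℕ∞) := by exact_mod_cast hmk
  have hms : (m : ℝ) / s < 1 :=
    (div_lt_one hs).2 (lt_of_le_of_lt (by exact_mod_cast hmk) (lowFloor_lt hs))
  have hms0 : 0 ≤ (m : ℝ) / s := by positivity
  refine (enorm_iteratedFDerivWithin_mul_le hΩ (hF.1.1.of_le hm') (hG.1.1.of_le hm') hx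
    fun i hi => mul_le_mul' (hF.enorm_iteratedFDerivWithin_le hs hi hmk hx)
      (hG.enorm_iteratedFDerivWithin_le hs (Nat.sub_le m i) hmk hx)).trans_eq ?_
  rw [Pi.mul_apply, ENNReal.ofReal_mul (hF.2.1 x hx),
    ENNReal.mul_rpow_of_nonneg _ _ (by linarith : 0 ≤ 1 - (m : ℝ) / s),
    ENNReal.mul_rpow_of_nonneg _ _ hms0, ENNReal.mul_rpow_of_nonneg _ _ hms0,
    ← ENNReal.rpow_mul, mul_div_cancel₀ _ hs.ne', ENNReal.rpow_natCast]
  ring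

lemma fsNorm_mul_le {s : ℝ} (hs : 0 < s) {Ω : Set E} (hconv : Convex ℝ Ω) (hΩ : IsOpen Ω)
    {F G : E → ℝ} (hF : MemFs s Ω F) (hG : MemFs s Ω G) :
    fsNorm s Ω (F * G) ≤
      ENNReal.ofReal (5 * 2 ^ lowFloor s + 2 ^ s) * fsNorm s Ω F * fsNorm s Ω G := by
  have hC : ENNReal.ofReal (5 * 2 ^ lowFloor s + 2 ^ s) = 5 * 2 ^ lowFloor s + 2 ^ s := by
    rw [ENNReal.ofReal_add (by positivity) (by positivity), ENNReal.ofReal_mul (by positivity),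
      ENNReal.ofReal_pow (by positivity), ← ENNReal.ofReal_rpow_of_pos two_pos]
    simp
  have hFc : csNorm s Ω F ≤ fsNorm s Ω F := le_self_add
  have hGc : csNorm s Ω G ≤ fsNorm s Ω G := le_self_add
  have hFd : derivSup s Ω F ≤ fsNorm s Ω F := le_self_add.trans hFc
  have hGd : derivSup s Ω G ≤ fsNorm s Ω G := le_self_add.trans hGc
  rw [hC]
  calc fsNorm s Ω (F * G)
      ≤ 2 ^ lowFloor s * (fsNorm s Ω F * fsNorm s Ω G)
          + 4 * 2 ^ lowFloor s * (fsNorm s Ω F * fsNorm s Ω G)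
          + 2 ^ s * (fsNorm s Ω F * fsNorm s Ω G) := by
        refine add_le_add (add_le_add ((derivSup_mul_le hΩ hF.1.1 hG.1.1).trans ?_)
          ((holderSemi_mul_le hs hconv hΩ hF.1 hG.1).trans ?_)) (flatSemi_mul_le hs hΩ hF hG)
        all_goals gcongr
    _ = (5 * 2 ^ lowFloor s + 2 ^ s) * fsNorm s Ω F * fsNorm s Ω G := by ring

lemma MemFs.mul {s : ℝ} (hs : 0 < s) {Ω : Set E} (hconv : Convex ℝ Ω) (hΩ : IsOpen Ω)
    {F G : E → ℝ} (hF : MemFs s Ω F) (hG : MemFs s Ω G) : MemFs s Ω (F * G) := by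
  have h : fsNorm s Ω (F * G) ≠ ∞ := ne_top_of_le_ne_top
    (ENNReal.mul_ne_top (ENNReal.mul_ne_top ENNReal.ofReal_ne_top hF.fsNorm_ne_top)
      hG.fsNorm_ne_top) (fsNorm_mul_le hs hconv hΩ hF hG)
  obtain ⟨h1, h2⟩ := ENNReal.add_ne_top.1 h
  exact ⟨⟨hF.1.1.mul hG.1.1, h1⟩, fun x hx => mul_nonneg (hF.2.1 x hx) (hG.2.1 x hx), h2⟩

end Auxiliary

/-- Proposition `Fs basic`(A): `F^s(Ω)` is a positive cone:
sums, nonnegative scalar multiples, and (up to a constant `C(n,s)`) products of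
`F^s(Ω)` functions remain in `F^s(Ω)`, with the corresponding seminorm
inequalities. -/
theorem statement1 (n : ℕ) (hn : 1 ≤ n) (s : ℝ) (hs : 0 < s) :
    ∃ C : ℝ, 0 < C ∧
      ∀ (Ω : Set (EuclideanSpace ℝ (Fin n))), Convex ℝ Ω → IsOpen Ω →
      ∀ F G : EuclideanSpace ℝ (Fin n) → ℝ, MemFs s Ω F → MemFs s Ω G →
      ∀ lam : ℝ, 0 ≤ lam →
        (MemFs s Ω (F + G) ∧
          flatSemi s Ω (F + G) ≤ flatSemi s Ω F + flatSemi s Ω G) ∧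
        (MemFs s Ω (lam • F) ∧
          flatSemi s Ω (lam • F) = ENNReal.ofReal lam * flatSemi s Ω F) ∧
        (MemFs s Ω (F * G) ∧
          fsNorm s Ω (F * G) ≤
            ENNReal.ofReal C * fsNorm s Ω F * fsNorm s Ω G) := by
  refine ⟨5 * 2 ^ lowFloor s + 2 ^ s, by positivity, fun Ω hconv hΩ F G hF hG lam hlam => ?_⟩
  exact ⟨⟨hF.add hs hΩ hG, flatSemi_add_le hs hΩ hF hG⟩,
    ⟨hF.const_smul hs hΩ hlam, flatSemi_const_smul hs hΩ hF.1.1 hlam⟩,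
    ⟨hF.mul hs hconv hΩ hG, fsNorm_mul_le hs hconv hΩ hF hG⟩⟩

end
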